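/- arXiv:2511.01161 — 2 statements merged into one kernel-verified Lean document; each statement's English description precedes it below -/
import Mathlib

section
/- Let n ≥ 1 be an integer, δ ∈ (0, n], p ∈ [1, ∞) and w ∈ A_{p,δ}. Then: (1) for every cube Q of ℝⁿ and every subset E ⊆ Q, (ℋ^δ_∞(E)/ℋ^δ_∞(Q))^p ≤ 2^p · [w]_{A_{p,δ}} · w_{ℋ^δ_∞}(E)/w_{ℋ^δ_∞}(Q); and (2) for every cube Q and every t ∈ [1, ∞), w_{ℋ^δ_∞}(tQ) ≤ 2^p · [w]_{A_{p,δ}} · t^{pδ} · w_{ℋ^δ_∞}(Q), where tQ denotes the cube concentric with Q of side length t·ℓ(Q). -/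
open scoped ENNReal
open Set MeasureTheory

noncomputable section

/-- An axis-parallel cube in `ℝⁿ`, described by its lower corner and positive side length. -/
structure Cube (n : ℕ) where
  corner : Fin n → ℝ
  side : ℝ
  side_pos : 0 < side

namespace Cube

/-- The half-open cube `∏ᵢ [cornerᵢ, cornerᵢ + side)` as a set of points. -/
def toSet {n : ℕ} (Q : Cube n) : Set (Fin n → ℝ) :=
  {x | ∀ i, Q.corner i ≤ x i ∧ x i < Q.corner i + Q.side}

/-- A cube is dyadic if it has the form `2^k·(z + [0,1)ⁿ)` with `k ∈ ℤ`, `z ∈ ℤⁿ`. -/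
def IsDyadic {n : ℕ} (Q : Cube n) : Prop :=
  ∃ (k : ℤ) (z : Fin n → ℤ), Q.side = (2:ℝ) ^ k ∧ ∀ i, Q.corner i = (z i : ℝ) * (2:ℝ) ^ k

/-- `Q'` is a dyadic subcube of `Q`, i.e. obtained from `Q` by repeated bisection. -/
def IsDyadicSubcube {n : ℕ} (Q' Q : Cube n) : Prop :=
  ∃ (k : ℕ) (z : Fin n → ℕ), (∀ i, z i < 2 ^ k) ∧
    Q'.side = Q.side / 2 ^ k ∧ ∀ i, Q'.corner i = Q.corner i + (z i : ℝ) * (Q.side / 2 ^ k)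

/-- The concentric dilate `t·Q` of a cube. -/
def dilate {n : ℕ} (Q : Cube n) (t : ℝ) (ht : 0 < t) : Cube n :=
  ⟨fun i => Q.corner i + Q.side / 2 - t * Q.side / 2, t * Q.side, mul_pos ht Q.side_pos⟩

end Cube

/-- The Hausdorff content `ℋ^δ_∞`. -/
def hContent (n : ℕ) (δ : ℝ) (E : Set (Fin n → ℝ)) : ℝ≥0∞ :=
  ⨅ (Qs : ℕ → Cube n) (_ : E ⊆ ⋃ i, (Qs i).toSet), ∑' i, ENNReal.ofReal ((Qs i).side ^ δ)

/-- The dyadic Hausdorff content `~ℋ^δ_∞`. -/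
def dContent (n : ℕ) (δ : ℝ) (E : Set (Fin n → ℝ)) : ℝ≥0∞ :=
  ⨅ (Qs : ℕ → Cube n) (_ : (∀ i, (Qs i).IsDyadic) ∧ E ⊆ ⋃ i, (Qs i).toSet),
    ∑' i, ENNReal.ofReal ((Qs i).side ^ δ)

/-- The Choquet integral `∫_E f dℋ^δ_∞`. -/
def integH (n : ℕ) (δ : ℝ) (f : (Fin n → ℝ) → ℝ) (E : Set (Fin n → ℝ)) : ℝ≥0∞ :=
  ∫⁻ t in Ioi (0:ℝ), hContent n δ {x | x ∈ E ∧ t < f x}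

/-- The Choquet integral `∫_E f d~ℋ^δ_∞` w.r.t. the dyadic Hausdorff content. -/
def integD (n : ℕ) (δ : ℝ) (f : (Fin n → ℝ) → ℝ) (E : Set (Fin n → ℝ)) : ℝ≥0∞ :=
  ∫⁻ t in Ioi (0:ℝ), dContent n δ {x | x ∈ E ∧ t < f x}

/-- A property holds `ℋ^δ_∞`-a.e. -/
def AEContent (n : ℕ) (δ : ℝ) (P : (Fin n → ℝ) → Prop) : Prop :=
  hContent n δ {x | ¬ P x} = 0

/-- `ℋ^δ_∞`-quasicontinuity. -/
def QuasiCont (n : ℕ) (δ : ℝ) (f : (Fin n → ℝ) → ℝ) : Prop :=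
  ∀ ε : ℝ, 0 < ε → ∃ O : Set (Fin n → ℝ),
    IsOpen O ∧ hContent n δ O < ENNReal.ofReal ε ∧ ContinuousOn f Oᶜ

/-- `L¹_loc(ℝⁿ, ℋ^δ_∞)`. -/
def MemL1loc (n : ℕ) (δ : ℝ) (f : (Fin n → ℝ) → ℝ) : Prop :=
  QuasiCont n δ f ∧ ∀ K : Set (Fin n → ℝ), IsCompact K → integH n δ (fun x => |f x|) K < ⊤

/-- `L^∞(ℝⁿ, ℋ^δ_∞)`. -/
def MemLinf (n : ℕ) (δ : ℝ) (f : (Fin n → ℝ) → ℝ) : Prop :=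
  QuasiCont n δ f ∧ ∃ M : ℝ, AEContent n δ (fun x => |f x| ≤ M)

/-- The `BMO(ℝⁿ, ℋ^δ_∞)` seminorm. -/
def bmoNorm (n : ℕ) (δ : ℝ) (f : (Fin n → ℝ) → ℝ) : ℝ≥0∞ :=
  ⨆ Q : Cube n, ⨅ c : ℝ,
    integH n δ (fun x => |f x - c|) Q.toSet / hContent n δ Q.toSet

/-- Membership in `BMO(ℝⁿ, ℋ^δ_∞)`. -/
def MemBMO (n : ℕ) (δ : ℝ) (f : (Fin n → ℝ) → ℝ) : Prop :=
  MemL1loc n δ f ∧ bmoNorm n δ f < ⊤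

/-- `essinf_{x ∈ Q} f := inf {t ∈ (0,∞) : ℋ^δ_∞({x ∈ Q : f x < t}) > 0}`. -/
def essInfQ (n : ℕ) (δ : ℝ) (f : (Fin n → ℝ) → ℝ) (Q : Cube n) : ℝ :=
  sInf {t : ℝ | 0 < t ∧ 0 < hContent n δ {x | x ∈ Q.toSet ∧ f x < t}}

/-- The `BLO(ℝⁿ, ℋ^δ_∞)` seminorm. -/
def bloNorm (n : ℕ) (δ : ℝ) (f : (Fin n → ℝ) → ℝ) : ℝ≥0∞ :=
  ⨆ Q : Cube n,
    integH n δ (fun x => |f x - essInfQ n δ f Q|) Q.toSet / hContent n δ Q.toSet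

/-- Membership in `BLO(ℝⁿ, ℋ^δ_∞)`. -/
def MemBLO (n : ℕ) (δ : ℝ) (f : (Fin n → ℝ) → ℝ) : Prop :=
  MemL1loc n δ f ∧ bloNorm n δ f < ⊤

/-- A weight: locally Choquet-integrable, quasicontinuous, positive `ℋ^δ_∞`-a.e. -/
def IsWeight (n : ℕ) (δ : ℝ) (w : (Fin n → ℝ) → ℝ) : Prop :=
  MemL1loc n δ w ∧ AEContent n δ (fun x => 0 < w x)

/-- The capacitary Muckenhoupt `A_{p,δ}` constant, for `p > 1`. -/
def apConst (n : ℕ) (δ p : ℝ) (w : (Fin n → ℝ) → ℝ) : ℝ≥0∞ :=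
  ⨆ Q : Cube n,
    (integH n δ w Q.toSet / hContent n δ Q.toSet) *
      (integH n δ (fun x => w x ^ (-(1 / (p - 1)))) Q.toSet / hContent n δ Q.toSet) ^ (p - 1)

/-- Membership in `A_{p,δ}`, `p > 1`. -/
def MemAp (n : ℕ) (δ p : ℝ) (w : (Fin n → ℝ) → ℝ) : Prop :=
  IsWeight n δ w ∧ apConst n δ p w < ⊤

/-- The Hardy–Littlewood maximal operator w.r.t. `ℋ^δ_∞`. -/
def maxOp (n : ℕ) (δ : ℝ) (g : (Fin n → ℝ) → ℝ) (x : Fin n → ℝ) : ℝ≥0∞ :=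
  ⨆ (Q : Cube n) (_ : x ∈ Q.toSet),
    integH n δ (fun y => |g y|) Q.toSet / hContent n δ Q.toSet

/-- The capacitary `A_{1,δ}` constant. -/
def a1Const (n : ℕ) (δ : ℝ) (w : (Fin n → ℝ) → ℝ) : ℝ≥0∞ :=
  sInf {c : ℝ≥0∞ | 0 < c ∧
    AEContent n δ (fun x => maxOp n δ w x ≤ c * ENNReal.ofReal (w x))}

/-- Membership in `A_{1,δ}`. -/
def MemA1 (n : ℕ) (δ : ℝ) (w : (Fin n → ℝ) → ℝ) : Prop :=
  IsWeight n δ w ∧ a1Const n δ w < ⊤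

/-- The `A_{p,δ}` constant for `p ∈ [1,∞)` (it is the `A_{1,δ}` constant when `p = 1`). -/
def apConstGen (n : ℕ) (δ p : ℝ) (w : (Fin n → ℝ) → ℝ) : ℝ≥0∞ :=
  if p = 1 then a1Const n δ w else apConst n δ p w

/-- Membership in `A_{p,δ}` for `p ∈ [1,∞)` (meaning `A_{1,δ}` when `p = 1`). -/
def MemApGen (n : ℕ) (δ p : ℝ) (w : (Fin n → ℝ) → ℝ) : Prop :=
  IsWeight n δ w ∧ apConstGen n δ p w < ⊤

/-- The weighted `BMO^q_w(ℝⁿ, ℋ^δ_∞)` seminorm. -/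
def bmoWNorm (n : ℕ) (δ q : ℝ) (w f : (Fin n → ℝ) → ℝ) : ℝ≥0∞ :=
  ⨆ Q : Cube n, ⨅ c : ℝ,
    (integH n δ (fun x => |f x - c| ^ q * w x) Q.toSet / integH n δ w Q.toSet) ^ (1 / q)

/-- Membership in `BMO^q_w(ℝⁿ, ℋ^δ_∞)`. -/
def MemBMOw (n : ℕ) (δ q : ℝ) (w f : (Fin n → ℝ) → ℝ) : Prop :=
  QuasiCont n δ f ∧
    (∀ K : Set (Fin n → ℝ), IsCompact K → integH n δ (fun x => |f x| ^ q * w x) K < ⊤) ∧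
    bmoWNorm n δ q w f < ⊤

/-- The integral average `f_{Q,δ}` with respect to the dyadic Hausdorff content. -/
def avgQ (n : ℕ) (δ : ℝ) (f : (Fin n → ℝ) → ℝ) (Q : Cube n) : ℝ :=
  ((integD n δ f (Q.toSet ∩ {x | 0 ≤ f x})).toReal -
      (integD n δ (fun x => -f x) (Q.toSet ∩ {x | f x < 0})).toReal) /
    ((dContent n δ (Q.toSet ∩ {x | 0 ≤ f x})).toReal +
      (dContent n δ (Q.toSet ∩ {x | f x < 0})).toReal)

lemma hC_le_of_cover (n : ℕ) (δ : ℝ) (hδ : 0 < δ) {ι : Type} [Countable ι] (Qs : ι → Cube n)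
    (E : Set (Fin n → ℝ)) (hE : E ⊆ ⋃ i, (Qs i).toSet) :
    hContent n δ E ≤ ∑' i, ENNReal.ofReal ((Qs i).side ^ δ) := by
  refine ENNReal.le_of_forall_pos_le_add ?_
  intro ε hε _
  obtain ⟨e, he, hes⟩ := ENNReal.exists_pos_sum_of_countable
    (ENNReal.coe_ne_zero.2 hε.ne') ℕ
  let T : ℕ → Cube n := fun i => ⟨fun _ => 0, (e i : ℝ) ^ (1 / δ),
    Real.rpow_pos_of_pos (by exact_mod_cast he i) _⟩
  obtain ⟨f⟩ : Nonempty (ℕ ≃ (ι ⊕ ℕ)) := by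
    obtain ⟨h⟩ := nonempty_denumerable (ι ⊕ ℕ)
    exact ⟨(Denumerable.eqv (ι ⊕ ℕ)).symm⟩
  let R : ι ⊕ ℕ → Cube n := Sum.elim Qs T
  have h1 : hContent n δ E ≤ ∑' i, ENNReal.ofReal ((R (f i)).side ^ δ) := by
    refine iInf₂_le (fun i => R (f i)) ?_
    intro x hx
    obtain ⟨i, hi⟩ := mem_iUnion.1 (hE hx)
    refine mem_iUnion.2 ⟨f.symm (Sum.inl i), ?_⟩
    simpa [R] using hi
  refine h1.trans ?_
  rw [f.tsum_eq (fun j => ENNReal.ofReal ((R j).side ^ δ)),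
    Summable.tsum_sum ENNReal.summable ENNReal.summable]
  refine add_le_add le_rfl (le_trans (le_of_eq ?_) hes.le)
  refine tsum_congr fun i => ?_
  change ENNReal.ofReal (((e i : ℝ) ^ (1 / δ)) ^ δ) = _
  rw [← Real.rpow_mul (NNReal.coe_nonneg (e i)), one_div, inv_mul_cancel₀ hδ.ne', Real.rpow_one]
  exact ENNReal.ofReal_coe_nnreal

lemma hC_mono (n : ℕ) (δ : ℝ) {E F : Set (Fin n → ℝ)} (h : E ⊆ F) :
    hContent n δ E ≤ hContent n δ F :=
  le_iInf₂ fun Qs hQ => iInf₂_le Qs (h.trans hQ)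

lemma hC_iUnion (n : ℕ) (δ : ℝ) (hδ : 0 < δ) {κ : Type} [Countable κ]
    (E : κ → Set (Fin n → ℝ)) :
    hContent n δ (⋃ k, E k) ≤ ∑' k, hContent n δ (E k) := by
  by_cases htop : ∑' k, hContent n δ (E k) = ⊤
  · rw [htop]; exact le_top
  refine ENNReal.le_of_forall_pos_le_add ?_
  intro ε hε _
  obtain ⟨e, he, hes⟩ := ENNReal.exists_pos_sum_of_countable
    (ENNReal.coe_ne_zero.2 hε.ne') κ
  have hk : ∀ k, ∃ Qs : ℕ → Cube n, E k ⊆ ⋃ i, (Qs i).toSet ∧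
      ∑' i, ENNReal.ofReal ((Qs i).side ^ δ) < hContent n δ (E k) + e k := by
    intro k
    have hlt : hContent n δ (E k) < hContent n δ (E k) + e k :=
      ENNReal.lt_add_right (ENNReal.ne_top_of_tsum_ne_top htop k)
        (ENNReal.coe_ne_zero.2 (he k).ne')
    conv_lhs at hlt => unfold hContent
    simp only [iInf_lt_iff] at hlt
    obtain ⟨Qs, h1, h2⟩ := hlt
    exact ⟨Qs, h1, h2⟩
  choose Qs h1 h2 using hk
  have := hC_le_of_cover n δ hδ (fun x : κ × ℕ => Qs x.1 x.2) (⋃ k, E k) (by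
    intro x hx
    obtain ⟨k, hk⟩ := mem_iUnion.1 hx
    obtain ⟨i, hi⟩ := mem_iUnion.1 (h1 k hk)
    exact mem_iUnion.2 ⟨(k, i), hi⟩)
  refine this.trans ?_
  rw [ENNReal.tsum_prod (f := fun k i => ENNReal.ofReal ((Qs k i).side ^ δ))]
  calc _ ≤ ∑' k, (hContent n δ (E k) + e k) := ENNReal.tsum_le_tsum fun k => (h2 k).le
    _ = _ := ENNReal.tsum_add
    _ ≤ _ := add_le_add le_rfl hes.le

lemma hC_union (n : ℕ) (δ : ℝ) (hδ : 0 < δ) (A B : Set (Fin n → ℝ)) :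
    hContent n δ (A ∪ B) ≤ hContent n δ A + hContent n δ B := by
  have := hC_iUnion n δ hδ (fun b : Bool => cond b A B)
  rw [← Set.union_eq_iUnion, tsum_fintype] at this
  simpa using this

lemma vol_cube {n : ℕ} (Q : Cube n) : volume Q.toSet = ENNReal.ofReal (Q.side ^ (n : ℝ)) := by
  have : Q.toSet = Set.pi univ (fun i => Ico (Q.corner i) (Q.corner i + Q.side)) := by
    ext x; simp [Cube.toSet]
  rw [this, Real.volume_pi_Ico]
  simp [ENNReal.ofReal_pow Q.side_pos.le]

lemma hC_cube (n : ℕ) (δ : ℝ) (hδ : 0 < δ) (hδn : δ ≤ n) (Q : Cube n) :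
    hContent n δ Q.toSet = ENNReal.ofReal (Q.side ^ δ) := by
  apply le_antisymm
  · simpa using hC_le_of_cover n δ hδ (fun _ : Unit => Q) Q.toSet
      (fun x hx => mem_iUnion.2 ⟨(), hx⟩)
  · refine le_iInf₂ fun Qs hQs => ?_
    by_cases hbig : ∃ i, Q.side ≤ (Qs i).side
    · obtain ⟨i, hi⟩ := hbig
      refine le_trans ?_ (ENNReal.le_tsum i)
      exact ENNReal.ofReal_le_ofReal (Real.rpow_le_rpow Q.side_pos.le hi hδ.le)
    · push Not at hbig
      have hv : ENNReal.ofReal (Q.side ^ (n : ℝ)) ≤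
          ∑' i, ENNReal.ofReal ((Qs i).side ^ (n : ℝ)) := by
        rw [← vol_cube Q]
        refine (measure_mono hQs).trans ((measure_iUnion_le _).trans (le_of_eq ?_))
        exact tsum_congr fun i => vol_cube _
      have e : ENNReal.ofReal (Q.side ^ δ) =
          ENNReal.ofReal (Q.side ^ (δ - n)) * ENNReal.ofReal (Q.side ^ (n : ℝ)) := by
        rw [← ENNReal.ofReal_mul (Real.rpow_nonneg Q.side_pos.le _),
          ← Real.rpow_add Q.side_pos]
        simp
      rw [e]
      refine (mul_le_mul_right hv _).trans ?_
      rw [← ENNReal.tsum_mul_left]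
      refine ENNReal.tsum_le_tsum fun i => ?_
      rw [← ENNReal.ofReal_mul (Real.rpow_nonneg Q.side_pos.le _)]
      refine ENNReal.ofReal_le_ofReal ?_
      have e2 : (Qs i).side ^ δ = (Qs i).side ^ (δ - n) * (Qs i).side ^ (n : ℝ) := by
        rw [← Real.rpow_add (Qs i).side_pos]; simp
      rw [e2]
      refine mul_le_mul_of_nonneg_right ?_ (Real.rpow_nonneg (Qs i).side_pos.le _)
      exact Real.rpow_le_rpow_of_nonpos (Qs i).side_pos (hbig i).le (by linarith)

lemma integH_mono (n : ℕ) (δ : ℝ) {f g : (Fin n → ℝ) → ℝ} {E F : Set (Fin n → ℝ)}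
    (hfg : ∀ x, f x ≤ g x) (h : E ⊆ F) : integH n δ f E ≤ integH n δ g F :=
  lintegral_mono fun _ => hC_mono n δ fun x hx => ⟨h hx.1, hx.2.trans_le (hfg x)⟩

lemma cheb (n : ℕ) (δ : ℝ) (f : (Fin n → ℝ) → ℝ) (E F : Set (Fin n → ℝ)) (a : ℝ)
    (hF : ∀ x ∈ F, x ∈ E ∧ a ≤ f x) :
    ENNReal.ofReal a * hContent n δ F ≤ integH n δ f E := by
  calc ENNReal.ofReal a * hContent n δ F = ∫⁻ _ in Ioo (0:ℝ) a, hContent n δ F := by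
        simp [mul_comm]
    _ ≤ ∫⁻ t in Ioo (0:ℝ) a, hContent n δ {x | x ∈ E ∧ t < f x} := by
        refine setLIntegral_mono' measurableSet_Ioo fun t ht => ?_
        exact hC_mono n δ fun x hx => ⟨(hF x hx).1, ht.2.trans_le (hF x hx).2⟩
    _ ≤ _ := lintegral_mono_set fun t ht => ht.1

lemma wQ_pos (n : ℕ) (δ : ℝ) (hδ : 0 < δ) (hδn : δ ≤ n) (w : (Fin n → ℝ) → ℝ)
    (hw : IsWeight n δ w) (Q : Cube n) : integH n δ w Q.toSet ≠ 0 := by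
  intro h0
  have hm : ∀ m : ℕ, hContent n δ {x | x ∈ Q.toSet ∧ 1 / ((m : ℝ) + 1) ≤ w x} = 0 := by
    intro m
    have := cheb n δ w Q.toSet {x | x ∈ Q.toSet ∧ 1 / ((m : ℝ) + 1) ≤ w x} _ (fun x hx => hx)
    rw [h0, nonpos_iff_eq_zero, mul_eq_zero] at this
    refine this.resolve_left ?_
    have : (0:ℝ) < 1 / ((m : ℝ) + 1) := by positivity
    simpa using this
  have h1 : hContent n δ (⋃ m : ℕ, {x | x ∈ Q.toSet ∧ 1 / ((m : ℝ) + 1) ≤ w x}) = 0 := by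
    have := hC_iUnion n δ hδ (fun m : ℕ => {x | x ∈ Q.toSet ∧ 1 / ((m : ℝ) + 1) ≤ w x})
    simp only [hm, tsum_zero] at this
    exact le_antisymm this bot_le
  have h2 : hContent n δ {x | ¬ 0 < w x} = 0 := hw.2
  have h3 : hContent n δ Q.toSet ≤ 0 := by
    have := hC_union n δ hδ {x | ¬ 0 < w x}
      (⋃ m : ℕ, {x | x ∈ Q.toSet ∧ 1 / ((m : ℝ) + 1) ≤ w x})
    rw [h1, h2, add_zero] at this
    refine le_trans (hC_mono n δ ?_) this
    intro x hx
    by_cases hx0 : 0 < w x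
    · obtain ⟨m, hm⟩ := exists_nat_one_div_lt hx0
      exact Or.inr (mem_iUnion.2 ⟨m, hx, hm.le⟩)
    · exact Or.inl hx0
  rw [hC_cube n δ hδ hδn, nonpos_iff_eq_zero, ENNReal.ofReal_eq_zero] at h3
  exact absurd (Real.rpow_pos_of_pos Q.side_pos δ) (not_lt.2 h3)

lemma wQ_fin (n : ℕ) (δ : ℝ) (w : (Fin n → ℝ) → ℝ)
    (hw : IsWeight n δ w) (Q : Cube n) : integH n δ w Q.toSet ≠ ⊤ := by
  have hK : IsCompact (Icc Q.corner (fun i => Q.corner i + Q.side)) := isCompact_Icc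
  refine ne_top_of_le_ne_top (hw.1.2 _ hK).ne (integH_mono n δ (fun x => le_abs_self _) ?_)
  intro x hx
  exact ⟨fun i => (hx i).1, fun i => (hx i).2.le⟩

/-- The two-sided weak type estimate replacing Hoelder. -/
lemma weak_split (n : ℕ) (δ p : ℝ) (hδ : 0 < δ) (hp : 1 < p) (w : (Fin n → ℝ) → ℝ)
    (hw : IsWeight n δ w) (E F : Set (Fin n → ℝ)) (hEF : E ⊆ F) (A B : ℝ)
    (hA0 : 0 < A) (hB0 : 0 < B) (hA : integH n δ w E ≤ ENNReal.ofReal A)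
    (hB : integH n δ (fun x => w x ^ (-(1 / (p - 1)))) F ≤ ENNReal.ofReal B) :
    hContent n δ E ^ p ≤ (2 : ℝ≥0∞) ^ p * (ENNReal.ofReal A * ENNReal.ofReal B ^ (p - 1)) := by
  have hp0 : 0 < p := by linarith
  have hp1 : 0 < p - 1 := by linarith
  set s : ℝ := (A / B) ^ ((p - 1) / p) with hs
  have hs0 : 0 < s := Real.rpow_pos_of_pos (div_pos hA0 hB0) _
  set c : ℝ := A ^ (1 / p) * B ^ ((p - 1) / p) with hc
  have hc0 : 0 < c := by positivity
  have hA' : A = s * c := by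
    rw [hs, hc, Real.div_rpow hA0.le hB0.le]
    have hb : B ^ ((p - 1) / p) ≠ 0 := by positivity
    have : A ^ ((p - 1) / p) * A ^ (1 / p) = A := by
      rw [← Real.rpow_add hA0]
      have : (p - 1) / p + 1 / p = 1 := by field_simp; ring
      rw [this, Real.rpow_one]
    calc A = A ^ ((p - 1) / p) * A ^ (1 / p) := this.symm
      _ = _ := by field_simp
  set r : ℝ := s ^ (-(1 / (p - 1))) with hr
  have hr0 : 0 < r := Real.rpow_pos_of_pos hs0 _
  have hB' : B = r * c := by
    have e : r = A ^ (-(1 / p)) * B ^ (1 / p) := by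
      rw [hr, hs, ← Real.rpow_mul (div_pos hA0 hB0).le]
      have : (p - 1) / p * -(1 / (p - 1)) = -(1 / p) := by field_simp
      rw [this, Real.div_rpow hA0.le hB0.le, Real.rpow_neg hB0.le, div_inv_eq_mul]
    rw [e, hc, Real.rpow_neg hA0.le]
    have ha : A ^ (1 / p) ≠ 0 := by positivity
    have : B ^ (1 / p) * B ^ ((p - 1) / p) = B := by
      rw [← Real.rpow_add hB0]
      have : 1 / p + (p - 1) / p = 1 := by field_simp; ring
      rw [this, Real.rpow_one]
    calc B = B ^ (1 / p) * B ^ ((p - 1) / p) := this.symm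
      _ = _ := by field_simp
  have key : ∀ (a : ℝ) (X : ℝ≥0∞), 0 < a → ENNReal.ofReal a * X ≤ ENNReal.ofReal (a * c) →
      X ≤ ENNReal.ofReal c := by
    intro a X ha h
    rw [ENNReal.ofReal_mul ha.le] at h
    exact (ENNReal.mul_le_mul_iff_right (by simpa using ha) ENNReal.ofReal_ne_top).1 h
  have hX : hContent n δ {x | x ∈ E ∧ s ≤ w x} ≤ ENNReal.ofReal c :=
    key s _ hs0 (hA' ▸ (cheb n δ w E _ s fun x hx => hx).trans hA)
  have hY : hContent n δ {x | x ∈ E ∧ 0 < w x ∧ w x ≤ s} ≤ ENNReal.ofReal c := by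
    refine key r _ hr0 ?_
    rw [← hB']
    refine le_trans (cheb n δ _ F _ r fun x hx => ⟨hEF hx.1, ?_⟩) hB
    exact Real.rpow_le_rpow_of_nonpos hx.2.1 hx.2.2 (by
      have : 0 < 1 / (p - 1) := by positivity
      linarith)
  have hZ : hContent n δ {x | ¬ 0 < w x} = 0 := hw.2
  have hE : hContent n δ E ≤ ENNReal.ofReal c + ENNReal.ofReal c := by
    have hsub : E ⊆ ({x | x ∈ E ∧ s ≤ w x} ∪ {x | x ∈ E ∧ 0 < w x ∧ w x ≤ s}) ∪
        {x | ¬ 0 < w x} := by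
      intro x hx
      by_cases h0 : 0 < w x
      · left
        rcases le_total s (w x) with h | h
        · exact Or.inl ⟨hx, h⟩
        · exact Or.inr ⟨hx, h0, h⟩
      · exact Or.inr h0
    refine (hC_mono n δ hsub).trans ((hC_union n δ hδ _ _).trans ?_)
    rw [hZ, add_zero]
    exact (hC_union n δ hδ _ _).trans (add_le_add hX hY)
  rw [← two_mul] at hE
  refine (ENNReal.rpow_le_rpow hE hp0.le).trans (le_of_eq ?_)
  rw [ENNReal.mul_rpow_of_nonneg _ _ hp0.le, ENNReal.ofReal_rpow_of_pos hc0,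
    ENNReal.ofReal_rpow_of_pos hB0, ← ENNReal.ofReal_mul hA0.le]
  congr 2
  rw [hc, Real.mul_rpow (by positivity) (by positivity), ← Real.rpow_mul hA0.le,
    ← Real.rpow_mul hB0.le]
  have e1 : 1 / p * p = 1 := by field_simp
  have e2 : (p - 1) / p * p = p - 1 := by field_simp
  rw [e1, e2, Real.rpow_one]

lemma key_p (n : ℕ) (δ p : ℝ) (hδ : 0 < δ) (hδn : δ ≤ n) (hp : 1 < p)
    (w : (Fin n → ℝ) → ℝ) (hw : IsWeight n δ w) (hK : apConst n δ p w < ⊤)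
    (Q : Cube n) (E : Set (Fin n → ℝ)) (hE : E ⊆ Q.toSet) :
    hContent n δ E ^ p * integH n δ w Q.toSet ≤
      (2 : ℝ≥0∞) ^ p * apConst n δ p w * integH n δ w E * hContent n δ Q.toSet ^ p := by
  have hp1 : 0 < p - 1 := by linarith
  set H := hContent n δ Q.toSet with hH
  have hHeq := hC_cube n δ hδ hδn Q
  have hH0 : H ≠ 0 := by
    rw [hH, hHeq]; simpa using Real.rpow_pos_of_pos Q.side_pos δ
  have hHt : H ≠ ⊤ := by rw [hH, hHeq]; exact ENNReal.ofReal_ne_top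
  set W := integH n δ w Q.toSet with hW
  have hW0 : W ≠ 0 := wQ_pos n δ hδ hδn w hw Q
  have hWt : W ≠ ⊤ := wQ_fin n δ w hw Q
  set A := integH n δ w E with hA
  have hAt : A ≠ ⊤ := ne_top_of_le_ne_top hWt (integH_mono n δ (fun _ => le_rfl) hE)
  set B := integH n δ (fun x => w x ^ (-(1 / (p - 1)))) Q.toSet with hB
  set K := apConst n δ p w with hKd
  have h1 : (W / H) * (B / H) ^ (p - 1) ≤ K := le_iSup (fun Q : Cube n =>
    (integH n δ w Q.toSet / hContent n δ Q.toSet) *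
      (integH n δ (fun x => w x ^ (-(1 / (p - 1)))) Q.toSet / hContent n δ Q.toSet) ^ (p - 1)) Q
  have hBt : B ≠ ⊤ := by
    intro hBt
    rw [hBt, ENNReal.top_div_of_ne_top hHt, ENNReal.top_rpow_of_pos hp1,
      ENNReal.mul_top (ENNReal.div_ne_zero.2 ⟨hW0, hHt⟩)] at h1
    exact absurd hK (not_lt.2 h1)
  have h2 : W * B ^ (p - 1) ≤ K * H ^ p := by
    have e : H ^ p = H * H ^ (p - 1) := by
      have := ENNReal.rpow_add 1 (p - 1) hH0 hHt
      rwa [add_sub_cancel, ENNReal.rpow_one] at this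
    calc W * B ^ (p - 1) = ((W / H) * (B / H) ^ (p - 1)) * H ^ p := by
          have eW : W = W / H * H := (ENNReal.div_mul_cancel hH0 hHt).symm
          have eB : B ^ (p - 1) = (B / H) ^ (p - 1) * H ^ (p - 1) := by
            rw [← ENNReal.mul_rpow_of_nonneg _ _ hp1.le, ENNReal.div_mul_cancel hH0 hHt]
          calc W * B ^ (p - 1) = (W / H * H) * ((B / H) ^ (p - 1) * H ^ (p - 1)) := by
                rw [← eW, ← eB]
            _ = _ := by rw [e]; ring
      _ ≤ _ := by gcongr
  have h3 : hContent n δ E ^ p ≤ (2 : ℝ≥0∞) ^ p * (A * B ^ (p - 1)) := by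
    have hlim : Filter.Tendsto (fun e : ℝ => (2 : ℝ≥0∞) ^ p *
        (ENNReal.ofReal (A.toReal + e) * ENNReal.ofReal (B.toReal + e) ^ (p - 1)))
        (nhdsWithin 0 (Ioi 0)) (nhds ((2 : ℝ≥0∞) ^ p * (A * B ^ (p - 1)))) := by
      have hid : Filter.Tendsto (fun e : ℝ => e) (nhdsWithin 0 (Ioi 0)) (nhds 0) :=
        Filter.tendsto_id.mono_left nhdsWithin_le_nhds
      have ha : ∀ X : ℝ≥0∞, X ≠ ⊤ → Filter.Tendsto (fun e : ℝ => ENNReal.ofReal (X.toReal + e))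
          (nhdsWithin 0 (Ioi 0)) (nhds X) := by
        intro X hX
        have := ENNReal.tendsto_ofReal (hid.const_add X.toReal)
        rwa [add_zero, ENNReal.ofReal_toReal hX] at this
      have hBp : B ^ (p - 1) ≠ ⊤ := ENNReal.rpow_ne_top_of_nonneg hp1.le hBt
      refine ENNReal.Tendsto.const_mul (ENNReal.Tendsto.mul (ha A hAt) (Or.inr hBp)
        ((ENNReal.continuous_rpow_const.tendsto B).comp (ha B hBt)) (Or.inr hAt)) (Or.inr ?_)
      exact ENNReal.rpow_ne_top_of_nonneg (by linarith) (by simp)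
    refine ge_of_tendsto hlim ?_
    filter_upwards [self_mem_nhdsWithin] with e he
    have he : 0 < e := he
    have hh : ∀ X : ℝ≥0∞, X ≠ ⊤ → X ≤ ENNReal.ofReal (X.toReal + e) := by
      intro X hX
      conv_lhs => rw [← ENNReal.ofReal_toReal hX]
      exact ENNReal.ofReal_le_ofReal (by linarith)
    exact weak_split n δ p hδ hp w hw E Q.toSet hE _ _
      (add_pos_of_nonneg_of_pos ENNReal.toReal_nonneg he)
      (add_pos_of_nonneg_of_pos ENNReal.toReal_nonneg he) (hh A hAt) (hh B hBt)
  calc hContent n δ E ^ p * W ≤ ((2 : ℝ≥0∞) ^ p * (A * B ^ (p - 1))) * W := by gcongr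
    _ = (2 : ℝ≥0∞) ^ p * A * (W * B ^ (p - 1)) := by ring
    _ ≤ (2 : ℝ≥0∞) ^ p * A * (K * H ^ p) := by gcongr
    _ = _ := by ring

lemma key_one (n : ℕ) (δ : ℝ) (hδ : 0 < δ) (hδn : δ ≤ n)
    (w : (Fin n → ℝ) → ℝ) (hw : IsWeight n δ w) (hK : a1Const n δ w < ⊤)
    (Q : Cube n) (E : Set (Fin n → ℝ)) (hE : E ⊆ Q.toSet) :
    hContent n δ E * integH n δ w Q.toSet ≤
      a1Const n δ w * integH n δ w E * hContent n δ Q.toSet := by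
  have hHeq := hC_cube n δ hδ hδn Q
  set H := hContent n δ Q.toSet with hH
  have hH0 : H ≠ 0 := by
    rw [hHeq]; simpa using Real.rpow_pos_of_pos Q.side_pos δ
  have hHt : H ≠ ⊤ := by rw [hHeq]; exact ENNReal.ofReal_ne_top
  set W := integH n δ w Q.toSet with hW
  have hWt : W ≠ ⊤ := wQ_fin n δ w hw Q
  set A := integH n δ w E with hA
  have hAt : A ≠ ⊤ := ne_top_of_le_ne_top hWt (integH_mono n δ (fun _ => le_rfl) hE)
  have hc : ∀ c : ℝ≥0∞, c ≠ ⊤ → 0 < c →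
      AEContent n δ (fun x => maxOp n δ w x ≤ c * ENNReal.ofReal (w x)) →
      hContent n δ E * (W / H) ≤ c * A := by
    intro c hct hc0 hae
    have hat : W / H / c ≠ ⊤ := ENNReal.div_ne_top (ENNReal.div_ne_top hWt hH0) hc0.ne'
    have h1 : hContent n δ E ≤ hContent n δ {x | x ∈ E ∧ (W / H / c).toReal ≤ w x} := by
      have hsub : E ⊆ {x | ¬ maxOp n δ w x ≤ c * ENNReal.ofReal (w x)} ∪
          ({x | ¬ 0 < w x} ∪ {x | x ∈ E ∧ (W / H / c).toReal ≤ w x}) := by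
        intro x hx
        by_cases h : maxOp n δ w x ≤ c * ENNReal.ofReal (w x)
        · right
          by_cases h0 : 0 < w x
          · right
            refine ⟨hx, ?_⟩
            refine ENNReal.toReal_le_of_le_ofReal h0.le ?_
            refine ENNReal.div_le_of_le_mul' (le_trans ?_ h)
            refine le_trans ?_ (le_iSup₂_of_le Q (hE hx) le_rfl)
            exact ENNReal.div_le_div_right (integH_mono n δ (fun x => le_abs_self _) subset_rfl) _
          · exact Or.inl h0
        · exact Or.inl h
      refine (hC_mono n δ hsub).trans ((hC_union n δ hδ _ _).trans ?_)
      have hae' : hContent n δ {x | ¬ maxOp n δ w x ≤ c * ENNReal.ofReal (w x)} = 0 := hae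
      have hZ : hContent n δ {x | ¬ 0 < w x} = 0 := hw.2
      rw [hae', zero_add]
      refine (hC_union n δ hδ _ _).trans ?_
      rw [hZ, zero_add]
    have h2 := cheb n δ w E {x | x ∈ E ∧ (W / H / c).toReal ≤ w x} _ (fun x hx => hx)
    rw [ENNReal.ofReal_toReal hat] at h2
    calc hContent n δ E * (W / H) = c * ((W / H / c) * hContent n δ E) := by
          rw [← mul_assoc, ENNReal.mul_div_cancel hc0.ne' hct, mul_comm]
      _ ≤ c * ((W / H / c) * hContent n δ {x | x ∈ E ∧ (W / H / c).toReal ≤ w x}) := by gcongr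
      _ ≤ c * A := by gcongr
  have hmain : hContent n δ E * (W / H) ≤ a1Const n δ w * A := by
    by_cases hA0 : A = 0
    · obtain ⟨c, ⟨hc0, hae⟩, hct⟩ := sInf_lt_iff.1 hK
      have := hc c hct.ne hc0 hae
      simpa [hA0] using this
    · rw [← ENNReal.div_le_iff hA0 hAt]
      refine le_sInf ?_
      rintro c ⟨hc0, hae⟩
      by_cases hct : c = ⊤
      · rw [hct]; exact le_top
      · rw [ENNReal.div_le_iff hA0 hAt]
        exact hc c hct hc0 hae
  calc hContent n δ E * W = hContent n δ E * (W / H) * H := by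
        rw [mul_assoc, ENNReal.div_mul_cancel hH0 hHt]
    _ ≤ _ := by gcongr

lemma key_gen (n : ℕ) (δ p : ℝ) (hδ : 0 < δ) (hδn : δ ≤ n) (hp : 1 ≤ p)
    (w : (Fin n → ℝ) → ℝ) (hw : MemApGen n δ p w)
    (Q : Cube n) (E : Set (Fin n → ℝ)) (hE : E ⊆ Q.toSet) :
    hContent n δ E ^ p * integH n δ w Q.toSet ≤
      (2 : ℝ≥0∞) ^ p * apConstGen n δ p w * integH n δ w E * hContent n δ Q.toSet ^ p := by
  obtain ⟨hw1, hw2⟩ := hw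
  by_cases h : p = 1
  · subst h
    simp only [apConstGen, if_true, ENNReal.rpow_one] at hw2 ⊢
    refine (key_one n δ hδ hδn w hw1 hw2 Q E hE).trans ?_
    rw [mul_assoc, mul_assoc, mul_assoc]
    exact le_mul_of_one_le_left bot_le (by norm_num)
  · simp only [apConstGen, if_neg h] at hw2 ⊢
    exact key_p n δ p hδ hδn (lt_of_le_of_ne hp (Ne.symm h)) w hw1 hw2 Q E hE

/-- doubling properties of capacitary Muckenhoupt weights. -/
theorem stmt15 (n : ℕ) (hn : 1 ≤ n) (δ p : ℝ) (hδ0 : 0 < δ) (hδn : δ ≤ n) (hp : 1 ≤ p)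
    (w : (Fin n → ℝ) → ℝ) (hw : MemApGen n δ p w) :
    (∀ Q : Cube n, ∀ E : Set (Fin n → ℝ), E ⊆ Q.toSet →
      (hContent n δ E / hContent n δ Q.toSet) ^ p ≤
        (2 : ℝ≥0∞) ^ p * apConstGen n δ p w *
          (integH n δ w E / integH n δ w Q.toSet)) ∧
    ∀ Q : Cube n, ∀ t : ℝ, ∀ ht : 1 ≤ t,
      integH n δ w (Q.dilate t (lt_of_lt_of_le one_pos ht)).toSet ≤
        (2 : ℝ≥0∞) ^ p * apConstGen n δ p w * ENNReal.ofReal (t ^ (p * δ)) *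
          integH n δ w Q.toSet := by
  have hp0 : 0 < p := by linarith
  have hH0 : ∀ Q : Cube n, hContent n δ Q.toSet ≠ 0 := fun Q => by
    rw [hC_cube n δ hδ0 hδn Q]; simpa using Real.rpow_pos_of_pos Q.side_pos δ
  have hHt : ∀ Q : Cube n, hContent n δ Q.toSet ≠ ⊤ := fun Q => by
    rw [hC_cube n δ hδ0 hδn Q]; exact ENNReal.ofReal_ne_top
  have hP0 : ∀ Q : Cube n, hContent n δ Q.toSet ^ p ≠ 0 := fun Q => by
    simp [ENNReal.rpow_eq_zero_iff, hH0 Q, hHt Q]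
  have hPt : ∀ Q : Cube n, hContent n δ Q.toSet ^ p ≠ ⊤ := fun Q =>
    ENNReal.rpow_ne_top_of_nonneg hp0.le (hHt Q)
  constructor
  · intro Q E hE
    have h := key_gen n δ p hδ0 hδn hp w hw Q E hE
    rw [ENNReal.div_rpow_of_nonneg _ _ hp0.le, ENNReal.div_le_iff (hP0 Q) (hPt Q),
      ← mul_div_assoc, ENNReal.mul_comm_div, ← mul_div_assoc,
      ENNReal.le_div_iff_mul_le (Or.inl (wQ_pos n δ hδ0 hδn w hw.1 Q))
        (Or.inl (wQ_fin n δ w hw.1 Q))]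
    refine h.trans (le_of_eq ?_)
    ring
  · intro Q t ht
    have ht0 : 0 < t := by linarith
    have hsub : Q.toSet ⊆ (Q.dilate t (lt_of_lt_of_le one_pos ht)).toSet := by
      intro x hx i
      have h1 := hx i
      have h2 : Q.side ≤ t * Q.side := le_mul_of_one_le_left Q.side_pos.le ht
      simp only [Cube.dilate]
      constructor <;> linarith [h1.1, h1.2]
    have h := key_gen n δ p hδ0 hδn hp w hw _ _ hsub
    have e : hContent n δ (Q.dilate t (lt_of_lt_of_le one_pos ht)).toSet ^ p =
        ENNReal.ofReal (t ^ (p * δ)) * hContent n δ Q.toSet ^ p := by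
      rw [hC_cube n δ hδ0 hδn, hC_cube n δ hδ0 hδn]
      simp only [Cube.dilate]
      rw [Real.mul_rpow ht0.le Q.side_pos.le, ENNReal.ofReal_mul (by positivity),
        ENNReal.mul_rpow_of_nonneg _ _ hp0.le,
        ENNReal.ofReal_rpow_of_pos (Real.rpow_pos_of_pos ht0 _), ← Real.rpow_mul ht0.le,
        mul_comm δ p]
    rw [e] at h
    rw [← ENNReal.mul_le_mul_iff_right (hP0 Q) (hPt Q)]
    refine h.trans (le_of_eq ?_)
    ring
end
end

section
/- Let n ≥ 1 be an integer, δ ∈ (0, n], and let f : ℝⁿ → [0, ∞) be a non-negative, ℋ^δ_∞-quasicontinuous function with ∫_{ℝⁿ} f d\~ℋ^δ_∞ < ∞. Then for \~ℋ^δ_∞-a.e. x ∈ ℝⁿ, the averages (1/\~ℋ^δ_∞(Q)) ∫_Q f d\~ℋ^δ_∞ converge to f(x) as Q → x, i.e., for every ε > 0 there is r > 0 such that |(1/\~ℋ^δ_∞(Q)) ∫_Q f d\~ℋ^δ_∞ − f(x)| < ε for every cube Q containing x with side length ℓ(Q) < r. -/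
open scoped ENNReal
open Set MeasureTheory

noncomputable section

lemma exists_dyadic_small (n : ℕ) (δ : ℝ) (hδ0 : 0 < δ) (ε : ℝ≥0∞) (hε : 0 < ε) :
    ∃ Q : Cube n, Q.IsDyadic ∧ ENNReal.ofReal (Q.side ^ δ) < ε := by
  have h1 : Filter.Tendsto (fun m : ℕ => ENNReal.ofReal ((((1:ℝ)/2) ^ m) ^ δ)) Filter.atTop
      (nhds (ENNReal.ofReal ((0:ℝ) ^ δ))) := by
    apply ENNReal.tendsto_ofReal
    exact (tendsto_pow_atTop_nhds_zero_of_lt_one (by norm_num) (by norm_num)).rpow_const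
      (Or.inr hδ0.le)
  rw [Real.zero_rpow hδ0.ne', ENNReal.ofReal_zero] at h1
  obtain ⟨m, hm⟩ := (h1.eventually (gt_mem_nhds hε)).exists
  refine ⟨⟨fun _ => 0, (1/2)^m, by positivity⟩, ⟨-m, fun _ => 0, ?_, ?_⟩, hm⟩
  · simp
  · simp

lemma exists_dyadic_seq (n : ℕ) (δ : ℝ) (hδ0 : 0 < δ) (ε : ℝ≥0∞) (hε : 0 < ε) :
    ∃ Qs : ℕ → Cube n, (∀ i, (Qs i).IsDyadic) ∧
      ∑' i, ENNReal.ofReal ((Qs i).side ^ δ) < ε := by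
  obtain ⟨e, he, hs⟩ := ENNReal.exists_pos_sum_of_countable' hε.ne' ℕ
  choose Qs h1 h2 using fun i => exists_dyadic_small n δ hδ0 (e i) (he i)
  exact ⟨Qs, h1, (ENNReal.tsum_le_tsum fun i => (h2 i).le).trans_lt hs⟩

lemma dContent_le (n : ℕ) (δ : ℝ) (E : Set (Fin n → ℝ)) (Qs : ℕ → Cube n)
    (h : ∀ i, (Qs i).IsDyadic) (hE : E ⊆ ⋃ i, (Qs i).toSet) :
    dContent n δ E ≤ ∑' i, ENNReal.ofReal ((Qs i).side ^ δ) :=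
  iInf₂_le Qs ⟨h, hE⟩

lemma exists_cover (n : ℕ) (δ : ℝ) (E : Set (Fin n → ℝ)) (c : ℝ≥0∞)
    (h : dContent n δ E < c) : ∃ Qs : ℕ → Cube n, (∀ i, (Qs i).IsDyadic) ∧
      E ⊆ (⋃ i, (Qs i).toSet) ∧ ∑' i, ENNReal.ofReal ((Qs i).side ^ δ) < c := by
  unfold dContent at h
  simp only [iInf_lt_iff] at h
  obtain ⟨Qs, ⟨h1, h2⟩, h3⟩ := h
  exact ⟨Qs, h1, h2, h3⟩

def dOM (n : ℕ) (δ : ℝ) (hδ0 : 0 < δ) : OuterMeasure (Fin n → ℝ) where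
  measureOf := dContent n δ
  empty := by
    refine le_antisymm (le_of_forall_pos_le_add fun ε hε => ?_) bot_le
    obtain ⟨Qs, h1, h2⟩ := exists_dyadic_seq n δ hδ0 ε hε
    rw [zero_add]
    exact (dContent_le n δ _ Qs h1 (by simp)).trans h2.le
  mono := by
    intro s t hst
    refine le_iInf₂ fun Qs h => ?_
    exact dContent_le n δ _ Qs h.1 (hst.trans h.2)
  iUnion_nat := by
    intro s _
    by_cases htop : ∑' i, dContent n δ (s i) = ⊤
    · rw [htop]; exact le_top
    refine ENNReal.le_of_forall_pos_le_add fun ε hε _ => ?_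
    obtain ⟨e, he, hs⟩ := ENNReal.exists_pos_sum_of_countable'
      (ENNReal.coe_pos.2 hε).ne' ℕ
    have hlt : ∀ i, dContent n δ (s i) < dContent n δ (s i) + e i := fun i =>
      ENNReal.lt_add_right (ENNReal.ne_top_of_tsum_ne_top htop i) (he i).ne'
    choose Qs h1 h2 h3 using fun i => exists_cover n δ (s i) _ (hlt i)
    refine (dContent_le n δ _ (fun m => Qs m.unpair.1 m.unpair.2) (fun m => h1 _ _) ?_).trans ?_
    · refine iUnion_subset fun i x hx => ?_
      obtain ⟨j, hj⟩ := mem_iUnion.1 (h2 i hx)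
      refine mem_iUnion.2 ⟨Nat.pair i j, ?_⟩
      simpa using hj
    · have e1 : ∑' m : ℕ, ENNReal.ofReal ((Qs m.unpair.1 m.unpair.2).side ^ δ)
          = ∑' p : ℕ × ℕ, ENNReal.ofReal ((Qs p.1 p.2).side ^ δ) :=
        Nat.pairEquiv.symm.tsum_eq (fun p : ℕ × ℕ => ENNReal.ofReal ((Qs p.1 p.2).side ^ δ))
      rw [e1, ENNReal.tsum_prod (f := fun i j => ENNReal.ofReal ((Qs i j).side ^ δ))]
      refine (ENNReal.tsum_le_tsum fun i => (h3 i).le).trans ?_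
      rw [ENNReal.tsum_add]
      gcongr

lemma dOM_apply (n : ℕ) (δ : ℝ) (hδ0 : 0 < δ) (E : Set (Fin n → ℝ)) :
    dOM n δ hδ0 E = dContent n δ E := rfl

lemma dContent_mono (n : ℕ) (δ : ℝ) {E F : Set (Fin n → ℝ)} (h : E ⊆ F) :
    dContent n δ E ≤ dContent n δ F :=
  le_iInf₂ fun Qs hQ => dContent_le n δ _ Qs hQ.1 (h.trans hQ.2)

lemma dContent_iUnion_le {ι : Type*} [Countable ι] (n : ℕ) (δ : ℝ) (hδ0 : 0 < δ)
    (E : ι → Set (Fin n → ℝ)) :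
    dContent n δ (⋃ i, E i) ≤ ∑' i, dContent n δ (E i) :=
  measure_iUnion_le (μ := dOM n δ hδ0) E

lemma dContent_union_le (n : ℕ) (δ : ℝ) (hδ0 : 0 < δ) (E F : Set (Fin n → ℝ)) :
    dContent n δ (E ∪ F) ≤ dContent n δ E + dContent n δ F :=
  measure_union_le (μ := dOM n δ hδ0) E F

lemma dContent_empty (n : ℕ) (δ : ℝ) (hδ0 : 0 < δ) : dContent n δ ∅ = 0 :=
  measure_empty (μ := dOM n δ hδ0)

lemma dContent_dyadic (n : ℕ) (δ : ℝ) (hδ0 : 0 < δ) (Q : Cube n) (hQ : Q.IsDyadic) :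
    dContent n δ Q.toSet ≤ ENNReal.ofReal (Q.side ^ δ) := by
  refine le_of_forall_pos_le_add fun ε hε => ?_
  obtain ⟨Qs, h1, h2⟩ := exists_dyadic_seq n δ hδ0 ε hε
  refine (dContent_le n δ _ (fun i => Nat.casesOn i Q Qs) ?_ ?_).trans ?_
  · rintro (_ | i)
    · exact hQ
    · exact h1 i
  · exact subset_iUnion_of_subset 0 subset_rfl
  · rw [tsum_eq_zero_add' ENNReal.summable]
    exact add_le_add le_rfl h2.le

def KK (n : ℕ) (δ : ℝ) : ℝ≥0∞ := 2 ^ n * ENNReal.ofReal (2 ^ δ)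

lemma KK_ne_top (n : ℕ) (δ : ℝ) : KK n δ ≠ ⊤ :=
  ENNReal.mul_ne_top (by simp) (by simp)

lemma dContent_cube_le (n : ℕ) (δ : ℝ) (hδ0 : 0 < δ) (Q : Cube n) :
    dContent n δ Q.toSet ≤ KK n δ * ENNReal.ofReal (Q.side ^ δ) := by
  obtain ⟨k, hk1, hk2⟩ := exists_mem_Ioc_zpow Q.side_pos (one_lt_two : (1:ℝ) < 2)
  set h : ℝ := 2 ^ (k+1) with hh
  have hpos : 0 < h := by positivity
  have h2 : h ≤ 2 * Q.side := by
    rw [hh, zpow_add_one₀ (by norm_num)]; linarith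
  let P : (Fin n → Fin 2) → Cube n := fun b =>
    ⟨fun i => ((⌊Q.corner i / h⌋ + ((b i : ℕ) : ℤ) : ℤ) : ℝ) * h, h, hpos⟩
  have hP : ∀ b, (P b).IsDyadic := fun b =>
    ⟨k+1, fun i => ⌊Q.corner i / h⌋ + ((b i : ℕ) : ℤ), rfl, fun i => rfl⟩
  have hsub : Q.toSet ⊆ ⋃ b, (P b).toSet := by
    intro y hy
    have key : ∀ i, ∃ b : Fin 2, ⌊y i / h⌋ = ⌊Q.corner i / h⌋ + ((b : ℕ) : ℤ) := by
      intro i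
      obtain ⟨ha, hb⟩ := hy i
      have e1 : ⌊Q.corner i / h⌋ ≤ ⌊y i / h⌋ := Int.floor_le_floor (by gcongr)
      have e2 : ⌊y i / h⌋ ≤ ⌊Q.corner i / h⌋ + 1 := by
        rw [← Int.floor_add_one]
        apply Int.floor_le_floor
        rw [div_add_one hpos.ne']
        gcongr
        linarith
      rcases (by omega : ⌊y i / h⌋ = ⌊Q.corner i / h⌋ ∨ ⌊y i / h⌋ = ⌊Q.corner i / h⌋ + 1) with e | e
      · exact ⟨0, by simp [e]⟩
      · exact ⟨1, by simp [e]⟩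
    choose b hb using key
    refine mem_iUnion.2 ⟨b, fun i => ?_⟩
    change ((⌊Q.corner i / h⌋ + ((b i : ℕ) : ℤ) : ℤ) : ℝ) * h ≤ y i ∧
      y i < ((⌊Q.corner i / h⌋ + ((b i : ℕ) : ℤ) : ℤ) : ℝ) * h + h
    rw [← hb i]
    constructor
    · rw [← le_div_iff₀ hpos]; exact Int.floor_le _
    · have := Int.lt_floor_add_one (y i / h)
      rw [div_lt_iff₀ hpos] at this
      linarith
  refine (dContent_mono n δ hsub).trans ((dContent_iUnion_le n δ hδ0 _).trans ?_)
  calc ∑' b, dContent n δ (P b).toSet ≤ ∑' b : Fin n → Fin 2, ENNReal.ofReal (h ^ δ) :=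
        ENNReal.tsum_le_tsum fun b => dContent_dyadic n δ hδ0 (P b) (hP b)
    _ = 2 ^ n * ENNReal.ofReal (h ^ δ) := by
        rw [tsum_fintype]; simp
    _ ≤ 2 ^ n * (ENNReal.ofReal (2 ^ δ) * ENNReal.ofReal (Q.side ^ δ)) := by
        gcongr
        rw [← ENNReal.ofReal_mul (by positivity), ← Real.mul_rpow (by norm_num) Q.side_pos.le]
        apply ENNReal.ofReal_le_ofReal
        exact Real.rpow_le_rpow hpos.le h2 hδ0.le
    _ = _ := by rw [KK, mul_assoc]

lemma dContent_le_hContent (n : ℕ) (δ : ℝ) (hδ0 : 0 < δ) (E : Set (Fin n → ℝ)) :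
    dContent n δ E ≤ KK n δ * hContent n δ E := by
  by_cases hE : hContent n δ E = ⊤
  · rw [hE, ENNReal.mul_top]
    · exact le_top
    · have : (0:ℝ) < 2 ^ δ := by positivity
      simp [KK, this]
  unfold hContent at *
  refine ENNReal.le_of_forall_pos_le_add ?_ 
  intro ε hε _
  by_contra hcon
  push Not at hcon
  have hK0 : KK n δ ≠ 0 := by
    have : (0:ℝ) < 2 ^ δ := by positivity
    simp [KK, this]
  have : (⨅ (Qs : ℕ → Cube n) (_ : E ⊆ ⋃ i, (Qs i).toSet), ∑' i, ENNReal.ofReal ((Qs i).side ^ δ))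
      < (⨅ (Qs : ℕ → Cube n) (_ : E ⊆ ⋃ i, (Qs i).toSet), ∑' i, ENNReal.ofReal ((Qs i).side ^ δ))
        + ε / KK n δ := by
    apply ENNReal.lt_add_right hE
    exact (ENNReal.div_pos (ENNReal.coe_pos.2 hε).ne' (KK_ne_top n δ)).ne'
  conv_lhs at this => rfl
  rw [iInf_lt_iff] at this
  obtain ⟨Qs, hQ⟩ := this
  rw [iInf_lt_iff] at hQ
  obtain ⟨hQ1, hQ2⟩ := hQ
  apply absurd hcon
  rw [not_lt]
  refine (dContent_mono n δ hQ1).trans ((dContent_iUnion_le n δ hδ0 _).trans ?_)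
  refine (ENNReal.tsum_le_tsum fun i => dContent_cube_le n δ hδ0 (Qs i)).trans ?_
  rw [ENNReal.tsum_mul_left]
  refine (mul_le_mul_right hQ2.le _).trans ?_
  rw [mul_add, ENNReal.mul_div_cancel hK0 (KK_ne_top n δ)]

lemma volume_cube (n : ℕ) (Q : Cube n) : volume Q.toSet = ENNReal.ofReal (Q.side ^ n) := by
  have : Q.toSet = Set.univ.pi fun i => Set.Ico (Q.corner i) (Q.corner i + Q.side) := by
    ext x; simp [Cube.toSet]
  rw [this, Real.volume_pi_Ico]
  simp [ENNReal.ofReal_pow Q.side_pos.le]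

lemma le_dContent_cube (n : ℕ) (δ : ℝ) (hδ0 : 0 < δ) (hδn : δ ≤ n) (Q : Cube n) :
    ENNReal.ofReal (Q.side ^ δ) ≤ dContent n δ Q.toSet := by
  refine le_iInf₂ fun Qs hQ => ?_
  have hs := Q.side_pos
  by_cases hc : ∃ i, Q.side ≤ (Qs i).side
  · obtain ⟨i, hi⟩ := hc
    refine le_trans ?_ (ENNReal.le_tsum i)
    exact ENNReal.ofReal_le_ofReal (Real.rpow_le_rpow hs.le hi hδ0.le)
  push Not at hc
  have h1 : ENNReal.ofReal (Q.side ^ n) ≤ ∑' i, ENNReal.ofReal ((Qs i).side ^ n) := by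
    rw [← volume_cube]
    refine (measure_mono hQ.2).trans ((measure_iUnion_le _).trans ?_)
    simp [volume_cube]
  have h2 : ∀ i, ENNReal.ofReal ((Qs i).side ^ n) ≤
      ENNReal.ofReal ((Qs i).side ^ δ) * ENNReal.ofReal (Q.side ^ ((n:ℝ) - δ)) := by
    intro i
    have hp := (Qs i).side_pos
    rw [← ENNReal.ofReal_mul (by positivity)]
    apply ENNReal.ofReal_le_ofReal
    calc (Qs i).side ^ n = (Qs i).side ^ δ * (Qs i).side ^ ((n:ℝ) - δ) := by
          rw [← Real.rpow_add hp, add_sub_cancel, Real.rpow_natCast]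
      _ ≤ _ := by
          gcongr
          exact (hc i).le
  have h3 := h1.trans (ENNReal.tsum_le_tsum h2)
  rw [ENNReal.tsum_mul_right] at h3
  have h4 : ENNReal.ofReal (Q.side ^ n) =
      ENNReal.ofReal (Q.side ^ δ) * ENNReal.ofReal (Q.side ^ ((n:ℝ) - δ)) := by
    rw [← ENNReal.ofReal_mul (by positivity), ← Real.rpow_add hs, add_sub_cancel, Real.rpow_natCast]
  rw [h4] at h3
  have h5 : (0:ℝ) < Q.side ^ ((n:ℝ) - δ) := by positivity
  exact (ENNReal.mul_le_mul_iff_left (by simpa using h5) (by simp)).1 h3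

lemma dContent_closedBall_le (n : ℕ) (δ : ℝ) (hδ0 : 0 < δ) (x : Fin n → ℝ) (r : ℝ) (hr : 0 < r) :
    dContent n δ (Metric.closedBall x r) ≤ KK n δ * ENNReal.ofReal ((3 * r) ^ δ) := by
  let Q : Cube n := ⟨fun i => x i - r, 3 * r, by positivity⟩
  refine (dContent_mono n δ ?_).trans (dContent_cube_le n δ hδ0 Q)
  intro y hy i
  have h1 := (dist_le_pi_dist y x i).trans (Metric.mem_closedBall.1 hy)
  rw [Real.dist_eq, abs_le] at h1
  change x i - r ≤ y i ∧ y i < x i - r + 3 * r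
  constructor <;> linarith [h1.1, h1.2]

lemma cube_dist_le (n : ℕ) (Q : Cube n) {x y : Fin n → ℝ} (hx : x ∈ Q.toSet) (hy : y ∈ Q.toSet) :
    dist x y ≤ Q.side := by
  refine (dist_pi_le_iff Q.side_pos.le).2 fun i => ?_
  rw [Real.dist_eq, abs_le]
  constructor <;> linarith [(hx i).1, (hx i).2, (hy i).1, (hy i).2]

lemma corner_mem (n : ℕ) (Q : Cube n) : Q.corner ∈ Q.toSet := fun i =>
  ⟨le_rfl, by linarith [Q.side_pos]⟩

/-- Weak type estimate for a countable family of cubes. -/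
lemma weak_type {ι : Type*} [Countable ι] (n : ℕ) (δ : ℝ) (hδ0 : 0 < δ) (c : ℝ≥0∞)
    (hc0 : c ≠ 0) (hct : c ≠ ⊤) (P : ι → Cube n) :
    ∃ B : Set (Fin n → ℝ),
      dContent n δ B ≤ (KK n δ * ENNReal.ofReal (6 ^ δ) + KK n δ * ENNReal.ofReal (30 ^ δ) / c) *
        ∑' i, ENNReal.ofReal ((P i).side ^ δ) ∧
      ∀ x ∉ B, ∀ Q : Cube n, x ∈ Q.toSet → Q.side < 1 →
        ∑' i, dContent n δ (Q.toSet ∩ (P i).toSet) ≤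
          KK n δ * (c * ENNReal.ofReal (Q.side ^ δ)) := by
  set S := ∑' i, ENNReal.ofReal ((P i).side ^ δ) with hS
  let μ : Measure (Fin n → ℝ) :=
    Measure.sum fun i => ENNReal.ofReal ((P i).side ^ δ) • Measure.dirac (P i).corner
  have hμ : ∀ A : Set (Fin n → ℝ), MeasurableSet A →
      μ A = ∑' i, ENNReal.ofReal ((P i).side ^ δ) * A.indicator 1 (P i).corner := by
    intro A hA
    simp only [μ, Measure.sum_apply _ hA, Measure.smul_apply, smul_eq_mul, Measure.dirac_apply' _ hA]
  have hμu : μ univ = S := by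
    rw [hμ _ MeasurableSet.univ]; simp [hS]
  let t : Set ((Fin n → ℝ) × ℝ) :=
    {p | 0 < p.2 ∧ p.2 < 1 ∧ c * ENNReal.ofReal (p.2 ^ δ) < μ (Metric.closedBall p.1 (2 * p.2))}
  obtain ⟨u, hut, hdisj, hcov⟩ :=
    Vitali.exists_disjoint_subfamily_covering_enlargement_closedBall t (fun p => p.1)
      (fun p => 2 * p.2) 2 (fun a ha => by linarith [ha.2.1]) 5 (by norm_num)
  have hucount : u.Countable := by
    refine hdisj.countable_of_nonempty_interior fun p hp => ?_
    refine ⟨p.1, Metric.ball_subset_interior_closedBall (Metric.mem_ball_self ?_)⟩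
    linarith [(hut hp).1]
  have : Countable u := hucount.to_subtype
  refine ⟨(⋃ i, Metric.closedBall (P i).corner (2 * (P i).side)) ∪
    ⋃ p : u, Metric.closedBall p.1.1 (5 * (2 * p.1.2)), ?_, ?_⟩
  · refine (dContent_union_le n δ hδ0 _ _).trans ?_
    rw [add_mul]
    refine add_le_add ?_ ?_
    · refine (dContent_iUnion_le n δ hδ0 _).trans ?_
      rw [← ENNReal.tsum_mul_left]
      refine ENNReal.tsum_le_tsum fun i => ?_
      have hp := (P i).side_pos
      refine (dContent_closedBall_le n δ hδ0 _ _ (by positivity)).trans ?_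
      rw [mul_assoc, ← ENNReal.ofReal_mul (by positivity),
        ← Real.mul_rpow (by norm_num) (by positivity)]
      apply le_of_eq
      congr 3; ring
    · refine (dContent_iUnion_le n δ hδ0 _).trans ?_
      have h1 : ∑' p : u, μ (Metric.closedBall p.1.1 (2 * p.1.2)) ≤ S := by
        rw [← hμu, ← measure_biUnion hucount hdisj
          (fun b _ => Metric.isClosed_closedBall.measurableSet)]
        exact measure_mono (subset_univ _)
      refine le_trans ?_ (mul_le_mul_right h1 _)
      rw [← ENNReal.tsum_mul_left]
      refine ENNReal.tsum_le_tsum fun p => ?_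
      obtain ⟨hp0, -, hp2⟩ := hut p.2
      refine (dContent_closedBall_le n δ hδ0 _ _ (by positivity)).trans ?_
      have e1 : ENNReal.ofReal ((3 * (5 * (2 * p.1.2))) ^ δ) =
          ENNReal.ofReal (30 ^ δ) * ENNReal.ofReal (p.1.2 ^ δ) := by
        rw [← ENNReal.ofReal_mul (by positivity), ← Real.mul_rpow (by norm_num) hp0.le]
        congr 2; ring
      rw [e1, ← mul_assoc]
      calc KK n δ * ENNReal.ofReal (30 ^ δ) * ENNReal.ofReal (p.1.2 ^ δ)
          = KK n δ * ENNReal.ofReal (30 ^ δ) / c * (c * ENNReal.ofReal (p.1.2 ^ δ)) := by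
            rw [← mul_assoc, ENNReal.div_mul_cancel hc0 hct]
        _ ≤ _ := by gcongr
  · intro x hx Q hxQ hQ1
    rw [mem_union, not_or] at hx
    obtain ⟨hx1, hx2⟩ := hx
    have hgood : μ (Metric.closedBall x (2 * Q.side)) ≤ c * ENNReal.ofReal (Q.side ^ δ) := by
      by_contra hcon
      push Not at hcon
      obtain ⟨b, hb, hsub⟩ := hcov (x, Q.side) ⟨Q.side_pos, hQ1, hcon⟩
      apply hx2
      refine mem_iUnion.2 ⟨⟨b, hb⟩, hsub (Metric.mem_closedBall_self ?_)⟩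
      have := Q.side_pos
      positivity
    refine le_trans ?_ (mul_le_mul_right hgood _)
    rw [hμ _ Metric.isClosed_closedBall.measurableSet, ← ENNReal.tsum_mul_left]
    refine ENNReal.tsum_le_tsum fun i => ?_
    rcases (Q.toSet ∩ (P i).toSet).eq_empty_or_nonempty with he | ⟨y, hy1, hy2⟩
    · rw [he, dContent_empty n δ hδ0]; exact bot_le
    have hmem : (P i).corner ∈ Metric.closedBall x (2 * Q.side) := by
      have d1 := cube_dist_le n Q hxQ hy1
      have d2 := cube_dist_le n (P i) hy2 (corner_mem n (P i))
      have d3 := dist_triangle x y (P i).corner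
      have d4 : x ∉ Metric.closedBall (P i).corner (2 * (P i).side) := fun h =>
        hx1 (mem_iUnion.2 ⟨i, h⟩)
      rw [Metric.mem_closedBall, not_le] at d4
      rw [Metric.mem_closedBall, dist_comm]
      linarith
    rw [indicator_of_mem hmem, Pi.one_apply, mul_one]
    exact (dContent_mono n δ inter_subset_right).trans (dContent_cube_le n δ hδ0 (P i))

lemma weak_type_sets (n : ℕ) (δ : ℝ) (hδ0 : 0 < δ) (κ : ℝ≥0∞) (hκ0 : κ ≠ 0) (hκt : κ ≠ ⊤) :
    ∃ C : ℝ≥0∞, C ≠ ⊤ ∧ ∀ (E : ℕ → Set (Fin n → ℝ)) (S : ℝ≥0∞), ∑' k, dContent n δ (E k) < S →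
      ∃ B : Set (Fin n → ℝ), dContent n δ B ≤ C * S ∧
      ∀ x ∉ B, ∀ Q : Cube n, x ∈ Q.toSet → Q.side < 1 →
        ∑' k, dContent n δ (Q.toSet ∩ E k) ≤ κ * ENNReal.ofReal (Q.side ^ δ) := by
  have hK0 : KK n δ ≠ 0 := by
    have : (0:ℝ) < 2 ^ δ := by positivity
    simp [KK, this]
  have hKt := KK_ne_top n δ
  have hc0 : κ / KK n δ ≠ 0 := (ENNReal.div_pos hκ0 hKt).ne'
  have hct : κ / KK n δ ≠ ⊤ := ENNReal.div_ne_top hκt hK0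
  refine ⟨KK n δ * ENNReal.ofReal (6 ^ δ) + KK n δ * ENNReal.ofReal (30 ^ δ) / (κ / KK n δ), ?_, ?_⟩
  · exact ENNReal.add_ne_top.2 ⟨ENNReal.mul_ne_top hKt ENNReal.ofReal_ne_top,
      ENNReal.div_ne_top (ENNReal.mul_ne_top hKt ENNReal.ofReal_ne_top) hc0⟩
  intro E S hS
  obtain ⟨e, he, hes⟩ := ENNReal.exists_pos_sum_of_countable' (tsub_pos_of_lt hS).ne' ℕ
  have hlt : ∀ k, dContent n δ (E k) < dContent n δ (E k) + e k := fun k =>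
    ENNReal.lt_add_right (ENNReal.ne_top_of_tsum_ne_top hS.ne_top k) (he k).ne'
  choose Ps h1 h2 h3 using fun k => exists_cover n δ (E k) _ (hlt k)
  obtain ⟨B, hB, hBx⟩ := weak_type n δ hδ0 _ hc0 hct (fun p : ℕ × ℕ => Ps p.1 p.2)
  refine ⟨B, hB.trans ?_, ?_⟩
  · gcongr
    rw [ENNReal.tsum_prod (f := fun i j => ENNReal.ofReal ((Ps i j).side ^ δ))]
    refine (ENNReal.tsum_le_tsum fun i => (h3 i).le).trans ?_
    rw [ENNReal.tsum_add]
    refine (add_le_add le_rfl hes.le).trans ?_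
    rw [add_tsub_cancel_of_le hS.le]
  · intro x hx Q hxQ hQ1
    have := hBx x hx Q hxQ hQ1
    rw [← mul_assoc, ENNReal.mul_div_cancel hK0 hKt] at this
    refine le_trans ?_ this
    rw [ENNReal.tsum_prod (f := fun i j => dContent n δ (Q.toSet ∩ (Ps i j).toSet))]
    refine ENNReal.tsum_le_tsum fun k => ?_
    refine (dContent_mono n δ ?_).trans (dContent_iUnion_le n δ hδ0 _)
    rw [← inter_iUnion]
    exact inter_subset_inter_right _ (h2 k)

lemma integD_unit_le (n : ℕ) (δ : ℝ) (f : (Fin n → ℝ) → ℝ) (E : Set (Fin n → ℝ)) :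
    ∑' k : ℕ, dContent n δ {x | x ∈ E ∧ (k:ℝ) + 1 < f x} ≤ integD n δ f E := by
  have hd : Pairwise (Function.onFun Disjoint fun k : ℕ => Ioc (k:ℝ) ((k:ℝ)+1)) := by
    intro a b hab
    rw [Function.onFun, Set.disjoint_left]
    rintro t ⟨h1, h2⟩ ⟨h3, h4⟩
    have e1 : (a:ℝ) < b + 1 := by linarith
    have e2 : (b:ℝ) < a + 1 := by linarith
    norm_cast at e1 e2
    omega
  have hsub : (⋃ k : ℕ, Ioc (k:ℝ) ((k:ℝ)+1)) ⊆ Ioi 0 := by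
    refine iUnion_subset fun k t ht => ?_
    exact lt_of_le_of_lt (Nat.cast_nonneg k) ht.1
  refine le_trans ?_ (lintegral_mono_set hsub)
  rw [lintegral_iUnion (fun k => measurableSet_Ioc) hd]
  refine ENNReal.tsum_le_tsum fun k => ?_
  calc dContent n δ {x | x ∈ E ∧ (k:ℝ) + 1 < f x}
      = ∫⁻ t in Ioc (k:ℝ) ((k:ℝ)+1), dContent n δ {x | x ∈ E ∧ (k:ℝ) + 1 < f x} := by
        simp
    _ ≤ _ := by
        refine setLIntegral_mono' measurableSet_Ioc fun t ht => dContent_mono n δ ?_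
        rintro x ⟨hx, hx2⟩
        exact ⟨hx, ht.2.trans_lt hx2⟩

lemma integD_le_unit (n : ℕ) (δ : ℝ) (f : (Fin n → ℝ) → ℝ) (E : Set (Fin n → ℝ)) :
    integD n δ f E ≤ ∑' k : ℕ, dContent n δ {x | x ∈ E ∧ (k:ℝ) < f x} := by
  have hsub : Ioi (0:ℝ) ⊆ (⋃ k : ℕ, Ioc (k:ℝ) ((k:ℝ)+1)) := by
    intro t ht
    have ht0 : 0 < ⌈t⌉₊ := Nat.ceil_pos.2 ht
    refine mem_iUnion.2 ⟨⌈t⌉₊ - 1, ?_, ?_⟩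
    · exact Nat.lt_ceil.1 (by omega)
    · have := Nat.le_ceil t
      rw [Nat.cast_sub ht0]
      simpa using this
  refine (lintegral_mono_set hsub).trans ((lintegral_iUnion_le _ _).trans ?_)
  refine ENNReal.tsum_le_tsum fun k => ?_
  calc _ ≤ ∫⁻ t in Ioc (k:ℝ) ((k:ℝ)+1), dContent n δ {x | x ∈ E ∧ (k:ℝ) < f x} := by
        refine setLIntegral_mono' measurableSet_Ioc fun t ht => dContent_mono n δ ?_
        rintro x ⟨hx, hx2⟩
        exact ⟨hx, ht.1.trans hx2⟩
    _ = _ := by simp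

lemma small_level_sum (n : ℕ) (δ : ℝ) (f : (Fin n → ℝ) → ℝ) (hfint : integD n δ f univ < ⊤)
    (ε : ℝ≥0∞) (hε : ε ≠ 0) (hεt : ε ≠ ⊤) :
    ∃ η : ℝ≥0∞, 0 < η ∧ ∀ O : Set (Fin n → ℝ), dContent n δ O ≤ η →
      ∑' k : ℕ, dContent n δ {x | x ∈ O ∧ (k:ℝ) - 1 < f x} < ε := by
  set g : ℕ → ℝ≥0∞ := fun k => dContent n δ {x | x ∈ univ ∧ (k:ℝ) + 1 < f x} with hg
  have hgs : ∑' k, g k ≠ ⊤ := ((integD_unit_le n δ f univ).trans_lt hfint).ne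
  have hε2 : 0 < ε / 2 := ENNReal.half_pos hε
  obtain ⟨m, hm⟩ := ((ENNReal.tendsto_sum_nat_add g hgs).eventually (gt_mem_nhds hε2)).exists
  refine ⟨ε / 2 / ((m+2 : ℕ) : ℝ≥0∞), ENNReal.div_pos hε2.ne' (ENNReal.natCast_ne_top _), ?_⟩
  intro O hO
  set F : ℕ → ℝ≥0∞ := fun k => dContent n δ {x | x ∈ O ∧ (k:ℝ) - 1 < f x} with hF
  have hsplit : ∑ k ∈ Finset.range (m+2), F k + ∑' k, F (k + (m+2)) = ∑' k, F k :=
    Summable.sum_add_tsum_nat_add' ENNReal.summable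
  rw [← hsplit, ← ENNReal.add_halves ε]
  have hhead : ∑ k ∈ Finset.range (m+2), F k ≤ ε / 2 := by
    calc _ ≤ ∑ k ∈ Finset.range (m+2), ε / 2 / ((m+2 : ℕ) : ℝ≥0∞) :=
          Finset.sum_le_sum fun k _ => (dContent_mono n δ fun x hx => hx.1).trans hO
      _ = ε / 2 := by
          rw [Finset.sum_const, Finset.card_range, nsmul_eq_mul]
          exact ENNReal.mul_div_cancel (by simp) (ENNReal.natCast_ne_top _)
  refine ENNReal.add_lt_add_of_le_of_lt ?_ hhead ?_
  · exact (lt_of_le_of_lt (hhead.trans ENNReal.half_le_self) hεt.lt_top).ne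
  · refine lt_of_le_of_lt (ENNReal.tsum_le_tsum fun k => dContent_mono n δ ?_) hm
    rintro x ⟨_, hx⟩
    refine ⟨trivial, ?_⟩
    push_cast at hx ⊢
    linarith

lemma quasi_D (n : ℕ) (δ : ℝ) (hδ0 : 0 < δ) (f : (Fin n → ℝ) → ℝ) (hf : QuasiCont n δ f)
    (η : ℝ≥0∞) (hη : 0 < η) :
    ∃ O : Set (Fin n → ℝ), dContent n δ O ≤ η ∧ ContinuousOn f Oᶜ := by
  have hK0 : KK n δ ≠ 0 := by
    have : (0:ℝ) < 2 ^ δ := by positivity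
    simp [KK, this]
  have hKt := KK_ne_top n δ
  set e := min η 1 / KK n δ with he
  have he0 : e ≠ 0 := (ENNReal.div_pos (lt_min hη one_pos).ne' hKt).ne'
  have het : e ≠ ⊤ := ENNReal.div_ne_top (ne_of_lt ((min_le_right _ _).trans_lt ENNReal.one_lt_top)) hK0
  obtain ⟨O, -, h1, h2⟩ := hf e.toReal (ENNReal.toReal_pos he0 het)
  rw [ENNReal.ofReal_toReal het] at h1
  refine ⟨O, (dContent_le_hContent n δ hδ0 O).trans ((mul_le_mul_right h1.le _).trans ?_), h2⟩
  rw [he, ENNReal.mul_div_cancel hK0 hKt]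
  exact min_le_left _ _

lemma exists_good (n : ℕ) (δ : ℝ) (hδ0 : 0 < δ) (f : (Fin n → ℝ) → ℝ) (hf : QuasiCont n δ f)
    (hfint : integD n δ f univ < ⊤) (κ : ℝ≥0∞) (hκ0 : κ ≠ 0) (hκt : κ ≠ ⊤)
    (θ : ℝ≥0∞) (hθ : θ ≠ 0) (hθt : θ ≠ ⊤) :
    ∃ O B : Set (Fin n → ℝ), O ⊆ B ∧ ContinuousOn f Oᶜ ∧ dContent n δ B ≤ θ ∧
      ∀ x ∉ B, ∀ Q : Cube n, x ∈ Q.toSet → Q.side < 1 →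
        ∑' k : ℕ, dContent n δ (Q.toSet ∩ {x | x ∈ O ∧ (k:ℝ) - 1 < f x}) ≤
          κ * ENNReal.ofReal (Q.side ^ δ) := by
  obtain ⟨C, hC, hCE⟩ := weak_type_sets n δ hδ0 κ hκ0 hκt
  have hC1 : C + 1 ≠ ⊤ := by simp [hC]
  have hθ2 : θ / 2 ≠ 0 := (ENNReal.half_pos hθ).ne'
  have hθ2t : θ / 2 ≠ ⊤ := (lt_of_le_of_lt ENNReal.half_le_self hθt.lt_top).ne
  set S := θ / 2 / (C + 1) with hS
  have hS0 : S ≠ 0 := (ENNReal.div_pos hθ2 hC1).ne'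
  have hSt : S ≠ ⊤ := ENNReal.div_ne_top hθ2t (by simp)
  obtain ⟨η, hη, hO⟩ := small_level_sum n δ f hfint S hS0 hSt
  obtain ⟨O, hO1, hO2⟩ := quasi_D n δ hδ0 f hf (min η (θ / 2)) (lt_min hη (pos_iff_ne_zero.2 hθ2))
  obtain ⟨B, hB, hBx⟩ := hCE _ S (hO O (hO1.trans (min_le_left _ _)))
  refine ⟨O, O ∪ B, subset_union_left, hO2, ?_, ?_⟩
  · refine (dContent_union_le n δ hδ0 _ _).trans ?_
    rw [← ENNReal.add_halves θ]
    refine add_le_add (hO1.trans (min_le_right _ _)) (hB.trans ?_)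
    calc C * S ≤ (C + 1) * S := by gcongr; exact le_self_add
      _ = θ / 2 := ENNReal.mul_div_cancel (by simp) hC1
  · intro x hx
    exact hBx x fun h => hx (Or.inr h)

lemma avg_bound (n : ℕ) (δ : ℝ) (hδ0 : 0 < δ) (hδn : δ ≤ n)
    (f : (Fin n → ℝ) → ℝ) (hf0 : ∀ x, 0 ≤ f x) (O : Set (Fin n → ℝ)) (κ : ℝ) (hκ : 0 < κ)
    (Q : Cube n) (a ε : ℝ) (ha : 0 ≤ a) (hε : 0 < ε)
    (hcl : ∀ y ∈ Q.toSet, y ∉ O → |f y - a| < ε)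
    (hsum : ∑' k : ℕ, dContent n δ (Q.toSet ∩ {x | x ∈ O ∧ (k:ℝ) - 1 < f x}) ≤
          ENNReal.ofReal κ * ENNReal.ofReal (Q.side ^ δ)) :
    |(integD n δ f Q.toSet / dContent n δ Q.toSet).toReal - a| ≤ ε + κ + a * κ := by
  set D := dContent n δ Q.toSet with hD
  have hlow : ENNReal.ofReal (Q.side ^ δ) ≤ D := le_dContent_cube n δ hδ0 hδn Q
  have hsp : 0 < Q.side ^ δ := Real.rpow_pos_of_pos Q.side_pos _
  have hD0 : D ≠ 0 := fun h => by
    rw [h] at hlow; simp at hlow; linarith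
  have hDt : D ≠ ⊤ := ne_top_of_le_ne_top
    (ENNReal.mul_ne_top (KK_ne_top n δ) ENNReal.ofReal_ne_top) (dContent_cube_le n δ hδ0 Q)
  have hsum' : ∑' k : ℕ, dContent n δ (Q.toSet ∩ {x | x ∈ O ∧ (k:ℝ) - 1 < f x}) ≤
      ENNReal.ofReal κ * D := hsum.trans (by gcongr)
  -- upper bound
  have hup : integD n δ f Q.toSet ≤ ENNReal.ofReal (a + ε) * D + ENNReal.ofReal κ * D := by
    have h1 : integD n δ f Q.toSet ≤ ∫⁻ t in Ioi (0:ℝ), ((Ioc 0 (a+ε)).indicator (fun _ => D) t +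
        dContent n δ {x | x ∈ Q.toSet ∩ O ∧ t < f x}) := by
      refine setLIntegral_mono' measurableSet_Ioi fun t ht => ?_
      by_cases hta : t ≤ a + ε
      · rw [indicator_of_mem (show t ∈ Ioc 0 (a+ε) from ⟨ht, hta⟩)]
        exact (dContent_mono n δ fun x hx => hx.1).trans le_self_add
      · refine le_trans (dContent_mono n δ ?_) le_add_self
        rintro y ⟨hy1, hy2⟩
        refine ⟨⟨hy1, ?_⟩, hy2⟩
        by_contra hyO
        have := (abs_lt.1 (hcl y hy1 hyO)).2
        push Not at hta
        linarith
    rw [lintegral_add_left (measurable_const.indicator measurableSet_Ioc)] at h1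
    refine h1.trans (add_le_add ?_ ?_)
    · refine (setLIntegral_le_lintegral _ _).trans ?_
      rw [lintegral_indicator measurableSet_Ioc, setLIntegral_const, Real.volume_Ioc, sub_zero, mul_comm]
    · refine le_trans ?_ hsum'
      refine (integD_le_unit n δ f (Q.toSet ∩ O)).trans (ENNReal.tsum_le_tsum fun k =>
        dContent_mono n δ ?_)
      rintro y ⟨⟨h1, h2⟩, h3⟩
      exact ⟨h1, h2, by linarith⟩
  have hlo : ENNReal.ofReal (a - ε) * D ≤ integD n δ f Q.toSet +
      ENNReal.ofReal (a - ε) * (ENNReal.ofReal κ * D) := by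
    have h1 : D ≤ dContent n δ {x | x ∈ Q.toSet ∧ a - ε < f x} + ENNReal.ofReal κ * D := by
      have h2 : dContent n δ (Q.toSet ∩ O) ≤ ENNReal.ofReal κ * D := by
        refine le_trans (le_trans (dContent_mono n δ ?_) (ENNReal.le_tsum
          (f := fun k : ℕ => dContent n δ (Q.toSet ∩ {x | x ∈ O ∧ (k:ℝ) - 1 < f x})) 0)) hsum'
        rintro y ⟨hy1, hy2⟩
        refine ⟨hy1, hy2, ?_⟩
        have := hf0 y
        push_cast
        linarith
      refine le_trans (le_trans (dContent_mono n δ ?_) (dContent_union_le n δ hδ0 _ _))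
        (add_le_add le_rfl h2)
      intro y hy
      by_cases hyO : y ∈ O
      · exact Or.inr ⟨hy, hyO⟩
      · refine Or.inl ⟨hy, ?_⟩
        have := (abs_lt.1 (hcl y hy hyO)).1
        linarith
    refine (mul_le_mul_right h1 _).trans ?_
    rw [mul_add]
    refine add_le_add ?_ le_rfl
    have h3 : Ioc 0 (a - ε) ⊆ Ioi (0:ℝ) := fun t ht => ht.1
    refine le_trans ?_ (lintegral_mono_set h3)
    calc _ = ∫⁻ t in Ioc 0 (a-ε), dContent n δ {x | x ∈ Q.toSet ∧ a - ε < f x} := by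
          rw [setLIntegral_const, Real.volume_Ioc, sub_zero, mul_comm]
      _ ≤ _ := by
          refine setLIntegral_mono' measurableSet_Ioc fun t ht => dContent_mono n δ ?_
          rintro y ⟨hy1, hy2⟩
          exact ⟨hy1, ht.2.trans_lt hy2⟩
  set I := integD n δ f Q.toSet with hI
  have hup' : I / D ≤ ENNReal.ofReal (a + ε + κ) := by
    rw [ENNReal.div_le_iff hD0 hDt, ENNReal.ofReal_add (by linarith) hκ.le, add_mul]
    exact hup
  have hIDt : I / D ≠ ⊤ := ne_top_of_le_ne_top ENNReal.ofReal_ne_top hup'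
  have hA0 : 0 ≤ (I / D).toReal := ENNReal.toReal_nonneg
  have hA1 : (I / D).toReal ≤ a + ε + κ := ENNReal.toReal_le_of_le_ofReal (by linarith) hup'
  have hak : 0 ≤ a * κ := by positivity
  rw [abs_le]
  refine ⟨?_, by linarith⟩
  by_cases hae : a ≤ ε
  · linarith
  push Not at hae
  have hlo' : ENNReal.ofReal (a - ε) ≤ I / D + ENNReal.ofReal ((a - ε) * κ) := by
    have : ENNReal.ofReal (a - ε) * D ≤ (I / D + ENNReal.ofReal ((a - ε) * κ)) * D := by
      rw [add_mul, ENNReal.div_mul_cancel hD0 hDt, ENNReal.ofReal_mul (by linarith), mul_assoc]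
      exact hlo
    exact (ENNReal.mul_le_mul_iff_left hD0 hDt).1 this
  have hnn : 0 ≤ (a - ε) * κ := mul_nonneg (by linarith) hκ.le
  rw [← ENNReal.ofReal_toReal hIDt, ← ENNReal.ofReal_add hA0 hnn,
    ENNReal.ofReal_le_ofReal_iff (by linarith)] at hlo'
  nlinarith [mul_pos hε hκ]

/-- Lebesgue differentiation for the dyadic Hausdorff content. -/
theorem stmt16 (n : ℕ) (hn : 1 ≤ n) (δ : ℝ) (hδ0 : 0 < δ) (hδn : δ ≤ n)
    (f : (Fin n → ℝ) → ℝ) (hf0 : ∀ x, 0 ≤ f x) (hfqc : QuasiCont n δ f)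
    (hfint : integD n δ f Set.univ < ⊤) :
    ∃ N : Set (Fin n → ℝ), dContent n δ N = 0 ∧
      ∀ x ∉ N, ∀ ε : ℝ, 0 < ε → ∃ r : ℝ, 0 < r ∧
        ∀ Q : Cube n, x ∈ Q.toSet → Q.side < r →
          |(integD n δ f Q.toSet / dContent n δ Q.toSet).toReal - f x| < ε := by
  classical
  have hκpos : ∀ m : ℕ, (0:ℝ) < 1 / ((m:ℝ) + 1) := fun m => by positivity
  have hex := fun m j : ℕ => exists_good n δ hδ0 f hfqc hfint
    (ENNReal.ofReal (1 / ((m:ℝ) + 1))) (by simpa using hκpos m) ENNReal.ofReal_ne_top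
    (ENNReal.ofReal (1 / ((j:ℝ) + 1))) (by simpa using hκpos j) ENNReal.ofReal_ne_top
  choose O B hOB hcont hBθ hgood using hex
  refine ⟨⋃ m, ⋂ j, B m j, ?_, ?_⟩
  · refine le_antisymm ((dContent_iUnion_le n δ hδ0 _).trans ?_) bot_le
    rw [nonpos_iff_eq_zero, ENNReal.tsum_eq_zero]
    intro m
    have h0 : Filter.Tendsto (fun j : ℕ => ENNReal.ofReal (1 / ((j:ℝ) + 1))) Filter.atTop
        (nhds (ENNReal.ofReal 0)) :=
      ENNReal.tendsto_ofReal tendsto_one_div_add_atTop_nhds_zero_nat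
    rw [ENNReal.ofReal_zero] at h0
    refine le_antisymm (ge_of_tendsto' h0 fun j => ?_) bot_le
    exact (dContent_mono n δ (iInter_subset _ j)).trans (hBθ m j)
  · intro x hx ε hε
    simp only [mem_iUnion, mem_iInter, not_exists, not_forall] at hx
    have hfx := hf0 x
    obtain ⟨m, hm⟩ := exists_nat_one_div_lt (show 0 < ε / 2 / (1 + f x) by positivity)
    obtain ⟨j, hj⟩ := hx m
    have hxO : x ∈ (O m j)ᶜ := fun h => hj (hOB m j h)
    obtain ⟨r, hr, hrx⟩ := Metric.continuousOn_iff.1 (hcont m j) x hxO (ε / 2) (by positivity)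
    refine ⟨min r 1, lt_min hr one_pos, fun Q hxQ hQ => ?_⟩
    have hb := avg_bound n δ hδ0 hδn f hf0 (O m j) _ (hκpos m) Q (f x) (ε / 2) hfx (by positivity)
      (fun y hy hyO => by
        have := hrx y hyO ((cube_dist_le n Q hy hxQ).trans_lt (hQ.trans_le (min_le_left _ _)))
        rwa [Real.dist_eq] at this)
      (hgood m j x hj Q hxQ (hQ.trans_le (min_le_right _ _)))
    rw [lt_div_iff₀ (by positivity)] at hm
    linarith
end
end
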